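/- arXiv:2108.12077 — 2 statements merged into one kernel-verified Lean document; each statement's English description precedes it below -/
import Mathlib

section
/- (Uniqueness for the linearized oblique derivative problem.) Let v₁, v₂ ∈ C²(Ω) ∩ C¹(cl Ω) both satisfy: Δv = 0 in Ω, ∇d·∇v = f/2 on 𝕊 (equivalently −2 sin θ · v_r + cos θ · v_θ = f/2 on 𝕊), v → 0 as |x| → ∞, and v = h on the equator ℰ, for the same data f and h. Then v₁ = v₂ on cl Ω. -/
noncomputable section

open MeasureTheory Real Filter

/-- The Legendre polynomial of degree `n`, via Rodrigues' formula. -/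
def legendreP (n : ℕ) : Polynomial ℝ :=
  Polynomial.C ((2 ^ n * n.factorial : ℝ)⁻¹) *
    Polynomial.derivative^[n] ((Polynomial.X ^ 2 - 1) ^ n)

/-- The associated Legendre function `P_l^m` (with Condon–Shortley phase),
so that `P_{|m|+2k}^{|m|}(0) = (-1)^{|m|+k} (2|m|+2k-1)!!/(2k)!!`. -/
def assocLegendre (l m : ℕ) (x : ℝ) : ℝ :=
  (-1 : ℝ) ^ m * (1 - x ^ 2) ^ ((m : ℝ) / 2) *
    (Polynomial.derivative^[m] (legendreP l)).eval x

/-- The normalizing constant `α_l^m` of the spherical harmonics. -/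
def alphaY (l : ℕ) (m : ℤ) : ℝ :=
  (-1 : ℝ) ^ ((m + |m|) / 2) *
    Real.sqrt ((2 * l + 1) * (l - m.natAbs).factorial /
      (4 * Real.pi * (l + m.natAbs).factorial))

/-- The spherical harmonic `Y_l^m` in latitude/longitude coordinates `(θ, φ)`. -/
def Ylm (l : ℕ) (m : ℤ) (θ φ : ℝ) : ℂ :=
  ((alphaY l m * assocLegendre l m.natAbs (Real.sin θ) : ℝ) : ℂ) *
    Complex.exp (Complex.I * m * φ)

/-- The surface measure `dS = cos θ dθ dφ` of the unit sphere, in the coordinate box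
`[-π/2, π/2] × [-π, π)`. -/
def sphereMeasure : Measure (ℝ × ℝ) :=
  ((volume : Measure (ℝ × ℝ)).restrict
      (Set.Icc (-(Real.pi / 2)) (Real.pi / 2) ×ˢ Set.Ico (-Real.pi) Real.pi)).withDensity
    fun p => ENNReal.ofReal (Real.cos p.1)

/-- The Fourier–Laplace coefficient `ψ̂_l^m = ∫_𝕊 ψ conj(Y_l^m) dS`. -/
def flCoeff (ψ : ℝ → ℝ → ℂ) (l : ℕ) (m : ℤ) : ℂ :=
  ∫ p : ℝ × ℝ, ψ p.1 p.2 * (starRingEnd ℂ) (Ylm l m p.1 p.2) ∂sphereMeasure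

/-- Membership in the fractional Sobolev space `H^s(𝕊)`:
`ψ ∈ L²(𝕊)` and `Σ_{l,m} (l+1)^{2s} |ψ̂_l^m|² < ∞`.
(The coefficients with `|m| > l` vanish automatically.) -/
def MemHs (s : ℝ) (ψ : ℝ → ℝ → ℂ) : Prop :=
  MeasureTheory.MemLp (fun p : ℝ × ℝ => ψ p.1 p.2) 2 sphereMeasure ∧
    Summable fun p : ℕ × ℤ =>
      ((p.1 : ℝ) + 1) ^ (2 * s) * ‖flCoeff ψ p.1 p.2‖ ^ 2

/-- The `H^s(𝕊)` norm. -/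
def HsNorm (s : ℝ) (ψ : ℝ → ℝ → ℂ) : ℝ :=
  Real.sqrt (∑' p : ℕ × ℤ, ((p.1 : ℝ) + 1) ^ (2 * s) * ‖flCoeff ψ p.1 p.2‖ ^ 2)

/-- Axially symmetric functions on the sphere: functions not depending on the longitude. -/
def Axial (ψ : ℝ → ℝ → ℂ) : Prop := ∀ θ φ₁ φ₂, ψ θ φ₁ = ψ θ φ₂

/-- Spherical (latitude/longitude) coordinates on the unit sphere of `ℝ³`. -/
def sphCoord (θ φ : ℝ) : EuclideanSpace ℝ (Fin 3) :=
  (WithLp.equiv 2 (Fin 3 → ℝ)).symm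
    ![Real.cos θ * Real.cos φ, Real.cos θ * Real.sin φ, Real.sin θ]

/-- The open exterior `Ω` of the unit sphere. -/
def extDomain : Set (EuclideanSpace ℝ (Fin 3)) := {x | 1 < ‖x‖}

/-- The closed exterior `cl Ω` of the unit sphere. -/
def closedExt : Set (EuclideanSpace ℝ (Fin 3)) := {x | 1 ≤ ‖x‖}

/-- The Laplacian of a function on `ℝ³`. -/
def lap {F : Type*} [NormedAddCommGroup F] [NormedSpace ℝ F]
    (u : EuclideanSpace ℝ (Fin 3) → F) (x : EuclideanSpace ℝ (Fin 3)) : F :=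
  ∑ i : Fin 3, fderiv ℝ (fun y => fderiv ℝ u y (EuclideanSpace.single i 1)) x
    (EuclideanSpace.single i 1)

/-- The radial derivative `u_r` at a point of the unit sphere (taken from outside). -/
def radialDeriv {F : Type*} [NormedAddCommGroup F] [NormedSpace ℝ F]
    (u : EuclideanSpace ℝ (Fin 3) → F) (θ φ : ℝ) : F :=
  derivWithin (fun r : ℝ => u (r • sphCoord θ φ)) (Set.Ici 1) 1

/-- The latitudinal derivative `u_θ` at a point of the unit sphere. -/
def thetaDeriv {F : Type*} [NormedAddCommGroup F] [NormedSpace ℝ F]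
    (u : EuclideanSpace ℝ (Fin 3) → F) (θ φ : ℝ) : F :=
  deriv (fun t => u (sphCoord t φ)) θ

/-- The boundary trace on the unit sphere of a real-valued function, in coordinates. -/
def traceR (u : EuclideanSpace ℝ (Fin 3) → ℝ) (θ φ : ℝ) : ℂ := (u (sphCoord θ φ) : ℂ)

/-- The boundary trace on the unit sphere of a complex-valued function, in coordinates. -/
def traceC (u : EuclideanSpace ℝ (Fin 3) → ℂ) (θ φ : ℝ) : ℂ := u (sphCoord θ φ)

/-- The Fourier coefficient on the equator `ℰ`. -/
def equatorCoeff (h : ℝ → ℂ) (m : ℤ) : ℂ :=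
  (1 / (2 * Real.pi)) * ∫ φ in (-Real.pi)..Real.pi, h φ * Complex.exp (-(Complex.I * m * φ))

/-- Membership in the fractional Sobolev space `H^s(ℰ)` on the equator. -/
def MemHsE (s : ℝ) (h : ℝ → ℂ) : Prop :=
  MeasureTheory.MemLp h 2 (volume.restrict (Set.Ico (-Real.pi) Real.pi)) ∧
    Summable fun m : ℤ => ((m.natAbs : ℝ) + 1) ^ (2 * s) * ‖equatorCoeff h m‖ ^ 2

/-- The `H^s(ℰ)` norm. -/
def HsNormE (s : ℝ) (h : ℝ → ℂ) : ℝ :=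
  Real.sqrt (∑' m : ℤ, ((m.natAbs : ℝ) + 1) ^ (2 * s) * ‖equatorCoeff h m‖ ^ 2)

/-- The constant `β_l^m`. -/
def betaLM (l : ℕ) (m : ℤ) : ℝ :=
  Real.sqrt (((l : ℝ) - m.natAbs) * ((l : ℝ) + m.natAbs) /
    ((2 * (l : ℝ) - 1) * (2 * (l : ℝ) + 1)))

/-- The constant `γ_l^m = -(l+1)β_l^m / (3(l+2)β_{l+1}^m)`. -/
def gammaLM (l : ℕ) (m : ℤ) : ℝ :=
  -(((l : ℝ) + 1) * betaLM l m) / (3 * ((l : ℝ) + 2) * betaLM (l + 1) m)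

/-- The product `Γ_k^m = ∏_{j=1}^k γ_{|m|+2j-1}^m` (with `Γ_0^m = 1`). -/
def GammaKM (m : ℤ) (k : ℕ) : ℝ :=
  ∏ j ∈ Finset.Icc 1 k, gammaLM (m.natAbs + 2 * j - 1) m

/-- The value `α_{|m|+2k}^m P_{|m|+2k}^{|m|}(0)`. -/
def PzeroM (m : ℤ) (k : ℕ) : ℝ :=
  alphaY (m.natAbs + 2 * k) m * assocLegendre (m.natAbs + 2 * k) m.natAbs 0

/-- The coefficient `a_l^m = f̂_l^m / (6(l+2)β_{l+1}^m)`. -/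
def aCoef (f : ℝ → ℝ → ℂ) (l : ℕ) (m : ℤ) : ℂ :=
  flCoeff f l m / ((6 * ((l : ℝ) + 2) * betaLM (l + 1) m : ℝ) : ℂ)

/-- The solution of the recurrence `b_{|m|-1}^m = b_{|m|}^m = 0`,
`b_{l+1}^m = γ_l^m b_{l-1}^m + a_l^m`; here `bSeq f m n = b_{|m|-1+n}^m`. -/
def bSeq (f : ℝ → ℝ → ℂ) (m : ℤ) : ℕ → ℂ
  | 0 => 0
  | 1 => 0
  | n + 2 => ((gammaLM (m.natAbs + n) m : ℝ) : ℂ) * bSeq f m n + aCoef f (m.natAbs + n) m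

/-- The coefficient `b_l^m`. -/
def bCoef (f : ℝ → ℝ → ℂ) (l : ℕ) (m : ℤ) : ℂ := bSeq f m (l + 1 - m.natAbs)

/-- The constant `ã^m`. -/
def aTilde (f : ℝ → ℝ → ℂ) (h : ℝ → ℂ) (m : ℤ) : ℂ :=
  (equatorCoeff h m - ∑' k : ℕ, bCoef f (m.natAbs + 2 * k) m * ((PzeroM m k : ℝ) : ℂ)) /
    (((∑' k : ℕ, GammaKM m k * PzeroM m k : ℝ)) : ℂ)

/-- The coefficient `c_l^m`: `c_{|m|+2k}^m = Γ_k^m ã^m` and `c_{|m|+2k-1}^m = 0`. -/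
def cCoef (f : ℝ → ℝ → ℂ) (h : ℝ → ℂ) (l : ℕ) (m : ℤ) : ℂ :=
  if m.natAbs ≤ l ∧ (l - m.natAbs) % 2 = 0 then
    ((GammaKM m ((l - m.natAbs) / 2) : ℝ) : ℂ) * aTilde f h m
  else 0

/-- The boundary trace `v(1, θ, φ)` of the formal series solution. -/
def vTraceS (f : ℝ → ℝ → ℂ) (h : ℝ → ℂ) (θ φ : ℝ) : ℂ :=
  ∑' p : ℕ × ℤ, (bCoef f p.1 p.2 + cCoef f h p.1 p.2) * Ylm p.1 p.2 θ φ

/-- The latitude of a point of `ℝ³`. -/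
def latitude (x : EuclideanSpace ℝ (Fin 3)) : ℝ := Real.arcsin (x 2 / ‖x‖)

/-- The longitude of a point of `ℝ³`. -/
def longitude (x : EuclideanSpace ℝ (Fin 3)) : ℝ :=
  Complex.arg ((x 0 : ℂ) + (x 1 : ℂ) * Complex.I)

/-- The formal series solution `v = Σ (b_l^m + c_l^m) r^{-l-1} Y_l^m(θ, φ)`. -/
def vFun (f : ℝ → ℝ → ℂ) (h : ℝ → ℂ) (x : EuclideanSpace ℝ (Fin 3)) : ℂ :=
  ∑' p : ℕ × ℤ, (bCoef f p.1 p.2 + cCoef f h p.1 p.2) * ((‖x‖ : ℂ) ^ (-(p.1 : ℤ) - 1)) *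
    Ylm p.1 p.2 (latitude x) (longitude x)

/-- `v` is a classical solution of the linearized (oblique derivative) problem
`Δv = 0` in `Ω`, `∇d⋅∇v = -2 sin θ v_r + cos θ v_θ = f/2` on `𝕊`, `v → 0` at infinity,
`v = h` on the equator; complex-valued version. -/
def SolvesObliqueC (v : EuclideanSpace ℝ (Fin 3) → ℂ) (f : ℝ → ℝ → ℂ) (h : ℝ → ℂ) : Prop :=
  ContDiffOn ℝ 2 v extDomain ∧ ContDiffOn ℝ 1 v closedExt ∧
    (∀ x ∈ extDomain, lap v x = 0) ∧
    (∀ θ ∈ Set.Icc (-(Real.pi / 2)) (Real.pi / 2), ∀ φ : ℝ,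
      -2 * (Real.sin θ : ℂ) * radialDeriv v θ φ + (Real.cos θ : ℂ) * thetaDeriv v θ φ
        = f θ φ / 2) ∧
    Filter.Tendsto v (Bornology.cobounded _) (nhds 0) ∧
    (∀ φ : ℝ, v (sphCoord 0 φ) = h φ)

/-- Real-valued version of `SolvesObliqueC`. -/
def SolvesObliqueR (v : EuclideanSpace ℝ (Fin 3) → ℝ) (f : ℝ → ℝ → ℝ) (h : ℝ → ℝ) : Prop :=
  ContDiffOn ℝ 2 v extDomain ∧ ContDiffOn ℝ 1 v closedExt ∧
    (∀ x ∈ extDomain, lap v x = 0) ∧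
    (∀ θ ∈ Set.Icc (-(Real.pi / 2)) (Real.pi / 2), ∀ φ : ℝ,
      -2 * Real.sin θ * radialDeriv v θ φ + Real.cos θ * thetaDeriv v θ φ = f θ φ / 2) ∧
    Filter.Tendsto v (Bornology.cobounded _) (nhds 0) ∧
    (∀ φ : ℝ, v (sphCoord 0 φ) = h φ)


/-!
By linearity and symmetry it suffices to show `w ≤ 0` for the difference `w` of two solutions.
Compare `w` with the strictly superharmonic barrier `M ‖x‖ ^ (-α)`, `0 < α < 1`, where `M` is the
maximum of `w` over `𝕊`. If `M > 0`, then `w` lies below the barrier on `cl Ω` and touches it at the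
maximum point, so `w_r ≤ -α M < 0` there, while `w_θ = 0`. Hence `∇d ⋅ ∇w = -2 sin θ w_r`, and the
homogeneous oblique condition forces `sin θ = 0`: the maximum point lies on the equator, where
`w = 0`. So `M ≤ 0`, and the maximum principle gives `w ≤ 0`.
-/

open Set Metric Bornology Module InnerProductSpace Laplacian
open scoped Topology

section OneVariable

theorem deriv_deriv_nonpos_of_isLocalMax {f : ℝ → ℝ} {a : ℝ} (hf : ContinuousAt f a)
    (hmax : IsLocalMax f a) : deriv (deriv f) a ≤ 0 := by
  by_contra! hpos
  have hmin : IsLocalMin f a := isLocalMin_of_deriv_deriv_pos hpos hmax.deriv_eq_zero hf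
  have hconst : f =ᶠ[𝓝 a] fun _ => f a := by
    filter_upwards [hmax, hmin] with t hle hge using le_antisymm hle hge
  have hzero : deriv (deriv f) a = 0 := by simp [hconst.deriv.deriv_eq]
  exact hpos.ne' hzero

theorem hasDerivWithinAt_Ici_le_of_le {f g : ℝ → ℝ} {f' g' a : ℝ}
    (hf : HasDerivWithinAt f f' (Ici a) a) (hg : HasDerivWithinAt g g' (Ici a) a)
    (hle : ∀ x ∈ Ici a, f x ≤ g x) (heq : f a = g a) : f' ≤ g' := by
  rw [← hasDerivWithinAt_Ioi_iff_Ici, hasDerivWithinAt_iff_tendsto_slope' self_notMem_Ioi]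
    at hf hg
  refine le_of_tendsto_of_tendsto hf hg ?_
  filter_upwards [self_mem_nhdsWithin] with x (hx : a < x)
  rw [slope_def_field, slope_def_field, heq]
  exact div_le_div_of_nonneg_right (sub_le_sub_right (hle x hx.le) _) (sub_nonneg.2 hx.le)

end OneVariable

section MaximumPrinciple

variable {E : Type*} [NormedAddCommGroup E]

theorem closure_setOf_lt_norm [NormedSpace ℝ E] {r : ℝ} (hr : r ≠ 0) :
    closure {x : E | r < ‖x‖} = {x | r ≤ ‖x‖} := by
  have hcompl : {x : E | r < ‖x‖} = (closedBall 0 r)ᶜ := by ext; simp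
  rw [hcompl, closure_compl, interior_closedBall _ hr]
  ext; simp

theorem isOpen_setOf_lt_norm (r : ℝ) : IsOpen {x : E | r < ‖x‖} :=
  isOpen_lt continuous_const continuous_norm

theorem frontier_setOf_lt_norm [NormedSpace ℝ E] {r : ℝ} (hr : r ≠ 0) :
    frontier {x : E | r < ‖x‖} = sphere 0 r := by
  have hcompl : {x : E | r < ‖x‖} = (closedBall 0 r)ᶜ := by ext; simp
  rw [hcompl, frontier_compl, frontier_closedBall _ hr]

theorem deriv_deriv_comp_add_smul [NormedSpace ℝ E] {F : Type*} [NormedAddCommGroup F]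
    [NormedSpace ℝ F] {f : E → F} {x : E} (hf : ContDiffAt ℝ 2 f x) (e : E) :
    deriv (deriv fun t : ℝ => f (x + t • e)) 0 = iteratedFDeriv ℝ 2 f x ![e, e] := by
  have hline : Tendsto (fun t : ℝ => x + t • e) (𝓝 0) (𝓝 x) :=
    Continuous.tendsto' (by fun_prop) _ _ (by simp)
  have hfirst : deriv (fun t : ℝ => f (x + t • e)) =ᶠ[𝓝 0]
      fun t => iteratedFDeriv ℝ 1 f (x + t • e) fun _ => e := by
    filter_upwards [hline.eventually (hf.eventually (by simp))] with t ht
    rw [(ht.differentiableAt two_ne_zero).deriv_comp_add_smul, iteratedFDeriv_one_apply]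
  have hf₀ : ContDiffAt ℝ ((1 : ℕ) + 1) f (x + (0 : ℝ) • e) := by
    simpa [one_add_one_eq_two] using hf
  rw [hfirst.deriv_eq, hf₀.deriv_fderiv_add_smul, zero_smul, add_zero,
    iteratedFDeriv_two_apply, iteratedFDeriv_two_apply]
  rfl

variable [InnerProductSpace ℝ E]

theorem hasFDerivAt_norm_rpow_of_ne_zero {x : E} (hx : x ≠ 0) (p : ℝ) :
    HasFDerivAt (fun y : E => ‖y‖ ^ p) ((p * ‖x‖ ^ (p - 2)) • innerSL ℝ x) x := by
  have hpow (q : ℝ) (y : E) : (‖y‖ ^ 2) ^ (q / 2) = ‖y‖ ^ q := by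
    rw [← Real.rpow_natCast_mul (norm_nonneg y)]
    congr 1
    push_cast
    ring
  have h := (hasStrictFDerivAt_norm_sq x).hasFDerivAt.rpow_const (p := p / 2) (by simp [hx])
  simp only [hpow, show p / 2 - 1 = (p - 2) / 2 by ring] at h
  refine h.congr_fderiv ?_
  ext y
  simp only [smul_apply, coe_innerSL_apply, nsmul_eq_mul, Nat.cast_ofNat, smul_eq_mul]
  ring

theorem contDiffAt_norm_rpow_of_ne_zero {x : E} (hx : x ≠ 0) (p : ℝ) {n : WithTop ℕ∞} :
    ContDiffAt ℝ n (fun y : E => ‖y‖ ^ p) x :=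
  (contDiffAt_norm ℝ hx).rpow_const_of_ne (norm_ne_zero_iff.2 hx)

variable [FiniteDimensional ℝ E]

theorem laplacian_nonpos_of_isLocalMax {f : E → ℝ} {x : E} (hf : ContDiffAt ℝ 2 f x)
    (hmax : IsLocalMax f x) : Δ f x ≤ 0 := by
  rw [laplacian_eq_iteratedFDeriv_stdOrthonormalBasis]
  refine Finset.sum_nonpos fun i _ => ?_
  set e := stdOrthonormalBasis ℝ E i
  have hline : ContinuousAt (fun t : ℝ => x + t • e) 0 := by fun_prop
  rw [← deriv_deriv_comp_add_smul hf]
  refine deriv_deriv_nonpos_of_isLocalMax ?_ ?_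
  · exact ContinuousAt.comp (by simpa using hf.continuousAt) hline
  · exact IsLocalMax.comp_continuous (b := 0) (by simpa using hmax) hline

theorem laplacian_norm_rpow {x : E} (hx : x ≠ 0) (p : ℝ) :
    Δ (fun y : E => ‖y‖ ^ p) x = p * (p + finrank ℝ E - 2) * ‖x‖ ^ (p - 2) := by
  have hgrad : fderiv ℝ (fun y : E => ‖y‖ ^ p) =ᶠ[𝓝 x]
      fun y => (p * ‖y‖ ^ (p - 2)) • innerSL ℝ y := by
    filter_upwards [isOpen_ne.mem_nhds hx] with y hy
    exact (hasFDerivAt_norm_rpow_of_ne_zero hy p).fderiv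
  have hHess : HasFDerivAt (fun y : E => (p * ‖y‖ ^ (p - 2)) • innerSL ℝ y) _ x :=
    ((hasFDerivAt_norm_rpow_of_ne_zero hx (p - 2)).const_mul p).smul (innerSL ℝ).hasFDerivAt
  have hpow : ‖x‖ ^ (p - 2) = ‖x‖ ^ (p - 2 - 2) * ‖x‖ ^ 2 := by
    rw [← Real.rpow_natCast, ← Real.rpow_add (norm_pos_iff.2 hx)]
    congr 1
    push_cast
    ring
  have hsecond (e : E) : iteratedFDeriv ℝ 2 (fun y : E => ‖y‖ ^ p) x ![e, e] =
      p * ‖x‖ ^ (p - 2) * ‖e‖ ^ 2 + p * (p - 2) * ‖x‖ ^ (p - 2 - 2) * inner ℝ x e ^ 2 := by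
    have hself : innerSL ℝ e e = ‖e‖ ^ 2 := real_inner_self_eq_norm_sq e
    rw [iteratedFDeriv_two_apply, hgrad.fderiv_eq, hHess.fderiv]
    simp only [Matrix.cons_val_zero, Matrix.cons_val_one, add_apply, smul_apply,
      ContinuousLinearMap.smulRight_apply, hself, coe_innerSL_apply, smul_eq_mul]
    ring
  simp only [laplacian_eq_iteratedFDeriv_stdOrthonormalBasis, hsecond, Finset.sum_add_distrib,
    ← Finset.mul_sum, OrthonormalBasis.sum_sq_inner_left, OrthonormalBasis.norm_eq_one]
  simp only [one_pow, Finset.sum_const, Finset.card_univ, Fintype.card_fin, nsmul_eq_mul, mul_one]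
  rw [hpow]
  ring

variable {U : Set E} {u : E → ℝ} {x : E}

theorem nonpos_of_laplacian_pos (hU : IsOpen U) (hu : ContDiffOn ℝ 2 u U)
    (huc : ContinuousOn u (closure U)) (hΔ : ∀ x ∈ U, 0 < Δ u x)
    (hfr : ∀ x ∈ frontier U, u x ≤ 0)
    (hinf : ∀ ε > 0, ∀ᶠ x in cobounded E ⊓ 𝓟 (closure U), u x < ε) (hx : x ∈ closure U) :
    u x ≤ 0 := by
  by_contra! hpos
  obtain ⟨y, hy, hmax⟩ : ∃ y ∈ closure U, IsMaxOn u (closure U) y := by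
    refine huc.exists_isMaxOn' isClosed_closure hx ?_
    rw [← Metric.cobounded_eq_cocompact]
    exact (hinf _ hpos).mono fun _ => le_of_lt
  by_cases hyU : y ∈ U
  · have hlocal : IsLocalMax u y := (hmax.on_subset subset_closure).isLocalMax (hU.mem_nhds hyU)
    exact (laplacian_nonpos_of_isLocalMax (hu.contDiffAt (hU.mem_nhds hyU)) hlocal).not_gt
      (hΔ y hyU)
  · have hyfr : y ∈ frontier U := hU.frontier_eq ▸ ⟨hy, hyU⟩
    exact (hpos.trans_le (hmax hx)).not_ge (hfr y hyfr)

theorem le_mul_norm_rpow_of_laplacian_nonneg {α M : ℝ} (hα : 0 < α)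
    (hαE : α + 2 < finrank ℝ E) (hM : 0 < M) (hU : IsOpen U) (h0 : 0 ∉ closure U)
    (hu : ContDiffOn ℝ 2 u U) (huc : ContinuousOn u (closure U)) (hΔ : ∀ x ∈ U, 0 ≤ Δ u x)
    (hfr : ∀ x ∈ frontier U, u x ≤ M * ‖x‖ ^ (-α))
    (hinf : ∀ ε > 0, ∀ᶠ x in cobounded E ⊓ 𝓟 (closure U), u x < ε) (hx : x ∈ closure U) :
    u x ≤ M * ‖x‖ ^ (-α) := by
  have hne {y : E} (hy : y ∈ closure U) : y ≠ 0 := fun h => h0 (h ▸ hy)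
  let b : E → ℝ := M • fun y => ‖y‖ ^ (-α)
  have hb {y : E} (hy : y ∈ closure U) : ContDiffAt ℝ 2 b y :=
    contDiffAt_const.smul (contDiffAt_norm_rpow_of_ne_zero (hne hy) _)
  have hb_nonneg (y : E) : 0 ≤ b y := mul_nonneg hM.le (by positivity)
  have hΔb {y : E} (hy : y ∈ U) : Δ b y < 0 := by
    have hy0 := hne (subset_closure hy)
    rw [laplacian_smul _ (contDiffAt_norm_rpow_of_ne_zero hy0 _), laplacian_norm_rpow hy0,
      smul_eq_mul]
    refine mul_neg_of_pos_of_neg hM (mul_neg_of_neg_of_pos ?_ ?_)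
    · exact mul_neg_of_neg_of_pos (neg_neg_of_pos hα) (by linarith)
    · have := norm_pos_iff.2 hy0
      positivity
  refine sub_nonpos.1 (nonpos_of_laplacian_pos (u := u - b) hU ?_ ?_ ?_ ?_ ?_ hx)
  · exact hu.sub fun y hy => (hb (subset_closure hy)).contDiffWithinAt
  · exact huc.sub fun y hy => (hb hy).continuousAt.continuousWithinAt
  · intro y hy
    rw [(hu.contDiffAt (hU.mem_nhds hy)).laplacian_sub (hb (subset_closure hy))]
    linarith [hΔ y hy, hΔb hy]
  · exact fun y hy => sub_nonpos.2 (hfr y hy)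
  · exact fun ε hε => (hinf ε hε).mono fun y hy => (sub_le_self _ (hb_nonneg y)).trans_lt hy

theorem nonpos_of_laplacian_nonneg (hE : 2 < finrank ℝ E) (hU : IsOpen U) (h0 : 0 ∉ closure U)
    (hu : ContDiffOn ℝ 2 u U) (huc : ContinuousOn u (closure U)) (hΔ : ∀ x ∈ U, 0 ≤ Δ u x)
    (hfr : ∀ x ∈ frontier U, u x ≤ 0)
    (hinf : ∀ ε > 0, ∀ᶠ x in cobounded E ⊓ 𝓟 (closure U), u x < ε) (hx : x ∈ closure U) :
    u x ≤ 0 := by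
  have hE' : (2 : ℝ) < finrank ℝ E := mod_cast hE
  set α : ℝ := (finrank ℝ E - 2) / 2 with hα
  have hx0 : 0 < ‖x‖ := norm_pos_iff.2 fun h => h0 (h ▸ hx)
  refine le_of_forall_pos_le_add fun ε hε => ?_
  have hle := le_mul_norm_rpow_of_laplacian_nonneg (α := α) (M := ε * ‖x‖ ^ α) (by linarith)
    (by linarith) (by positivity) hU h0 hu huc hΔ
    (fun y hy => (hfr y hy).trans (by positivity)) hinf hx
  rwa [mul_assoc, ← Real.rpow_add hx0, add_neg_cancel, Real.rpow_zero, mul_one,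
    ← zero_add ε] at hle

theorem radial_deriv_neg_of_laplacian_nonneg (hE : 2 < finrank ℝ E)
    (hu : ContDiffOn ℝ 2 u {x | 1 < ‖x‖}) (huc : ContinuousOn u {x | 1 ≤ ‖x‖})
    (hΔ : ∀ x, 1 < ‖x‖ → 0 ≤ Δ u x) (hinf : ∀ ε > 0, ∀ᶠ x in cobounded E, u x < ε)
    (hx : ‖x‖ = 1) (hpos : 0 < u x) (hmax : ∀ y, ‖y‖ = 1 → u y ≤ u x) {u' : ℝ}
    (hu' : HasDerivWithinAt (fun r : ℝ => u (r • x)) u' (Ici 1) 1) : u' < 0 := by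
  have hE' : (2 : ℝ) < finrank ℝ E := mod_cast hE
  set α : ℝ := (finrank ℝ E - 2) / 2 with hα
  have hcl := closure_setOf_lt_norm (E := E) one_ne_zero
  have hbarrier {y : E} (hy : 1 ≤ ‖y‖) : u y ≤ u x * ‖y‖ ^ (-α) := by
    refine le_mul_norm_rpow_of_laplacian_nonneg (by linarith) (by linarith) hpos
      (isOpen_setOf_lt_norm 1) (by simp [hcl]) hu (hcl ▸ huc) hΔ ?_
      (fun ε hε => (hinf ε hε).filter_mono inf_le_left) (hcl ▸ hy)
    intro z hz
    have hz1 : ‖z‖ = 1 := by simpa [frontier_setOf_lt_norm] using hz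
    simpa [hz1] using hmax z hz1
  have hderiv : HasDerivWithinAt (fun r : ℝ => u x * r ^ (-α)) (u x * -α) (Ici 1) 1 := by
    simpa using
      ((Real.hasDerivAt_rpow_const (p := -α) (Or.inl one_ne_zero)).const_mul
        (u x)).hasDerivWithinAt
  have hle : u' ≤ u x * -α := by
    refine hasDerivWithinAt_Ici_le_of_le hu' hderiv (fun r (hr : 1 ≤ r) => ?_) (by simp)
    have hnorm : ‖r • x‖ = r := by rw [norm_smul, hx, mul_one, Real.norm_of_nonneg (by linarith)]
    have hbelow := hbarrier (y := r • x) (hnorm.symm ▸ hr)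
    rwa [hnorm] at hbelow
  exact hle.trans_lt (mul_neg_of_pos_of_neg hpos (by linarith))

end MaximumPrinciple

section SphericalCoordinates

theorem norm_sphCoord (θ φ : ℝ) : ‖sphCoord θ φ‖ = 1 := by
  rw [EuclideanSpace.norm_eq, Real.sqrt_eq_one]
  simp only [sphCoord, Fin.sum_univ_three, Real.norm_eq_abs, sq_abs, WithLp.equiv_symm_apply,
    Matrix.cons_val_zero, Matrix.cons_val_one, Matrix.cons_val]
  linear_combination (cos θ) ^ 2 * sin_sq_add_cos_sq φ + sin_sq_add_cos_sq θ

theorem exists_sphCoord_eq {x : EuclideanSpace ℝ (Fin 3)} (hx : ‖x‖ = 1) :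
    ∃ θ ∈ Icc (-(π / 2)) (π / 2), ∃ φ, sphCoord θ φ = x := by
  have hsum : x 0 ^ 2 + x 1 ^ 2 + x 2 ^ 2 = 1 := by
    simpa [hx, Fin.sum_univ_three] using (EuclideanSpace.norm_sq_eq x).symm
  let z : ℂ := ⟨x 0, x 1⟩
  have hcos : cos (arcsin (x 2)) = ‖z‖ := by
    rw [cos_arcsin, Complex.norm_eq_sqrt_sq_add_sq, ← hsum, add_sub_cancel_right]
  have hsin : sin (arcsin (x 2)) = x 2 := sin_arcsin (by nlinarith) (by nlinarith)
  refine ⟨arcsin (x 2), arcsin_mem_Icc _, Complex.arg z, ?_⟩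
  ext i
  fin_cases i
  · simp [sphCoord, hcos, Complex.norm_mul_cos_arg, z]
  · simp [sphCoord, hcos, Complex.norm_mul_sin_arg, z]
  · simp [sphCoord, hsin]

theorem differentiable_sphCoord (φ : ℝ) : Differentiable ℝ fun θ => sphCoord θ φ := by
  unfold sphCoord
  rw [differentiable_euclidean]
  intro i
  fin_cases i <;> simp

variable {F : Type*} [NormedAddCommGroup F] [NormedSpace ℝ F]
  {u v : EuclideanSpace ℝ (Fin 3) → F}

theorem hasDerivWithinAt_radialDeriv (hu : DifferentiableOn ℝ u closedExt) (θ φ : ℝ) :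
    HasDerivWithinAt (fun r : ℝ => u (r • sphCoord θ φ)) (radialDeriv u θ φ) (Ici 1) 1 := by
  have hmaps : MapsTo (fun r : ℝ => r • sphCoord θ φ) (Ici 1) closedExt := fun r hr => by
    simpa [closedExt, norm_smul, norm_sphCoord] using le_trans hr (le_abs_self r)
  exact (hu.comp (by fun_prop) hmaps 1 self_mem_Ici).hasDerivWithinAt

theorem hasDerivAt_thetaDeriv (hu : DifferentiableOn ℝ u closedExt) (θ φ : ℝ) :
    HasDerivAt (fun t => u (sphCoord t φ)) (thetaDeriv u θ φ) θ := by
  have hcomp : DifferentiableOn ℝ (fun t => u (sphCoord t φ)) univ :=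
    hu.comp (differentiable_sphCoord φ).differentiableOn fun t _ => (norm_sphCoord t φ).ge
  exact (differentiableOn_univ.1 hcomp θ).hasDerivAt

theorem lap_eq_laplacian {x : EuclideanSpace ℝ (Fin 3)} (hu : ContDiffAt ℝ 2 u x) :
    lap u x = Δ u x := by
  have hd : DifferentiableAt ℝ (fderiv ℝ u) x :=
    (hu.fderiv_right (m := 1) (by norm_num)).differentiableAt one_ne_zero
  rw [laplacian_eq_iteratedFDeriv_orthonormalBasis u (EuclideanSpace.basisFun (Fin 3) ℝ), lap]
  refine Finset.sum_congr rfl fun i _ => ?_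
  rw [iteratedFDeriv_two_apply, fderiv_clm_apply hd (differentiableAt_const _)]
  simp

theorem lap_sub {x : EuclideanSpace ℝ (Fin 3)} (hu : ContDiffAt ℝ 2 u x)
    (hv : ContDiffAt ℝ 2 v x) : lap (u - v) x = lap u x - lap v x := by
  have hsub : ContDiffAt ℝ 2 (u - v) x := hu.sub hv
  rw [lap_eq_laplacian hsub, hu.laplacian_sub hv, lap_eq_laplacian hu, lap_eq_laplacian hv]

end SphericalCoordinates

section ObliqueProblem

/-- The oblique derivative `∇d ⋅ ∇v = -2 sin θ v_r + cos θ v_θ` on the unit sphere, where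
`d(x) = x₃ / ‖x‖ ^ 3` is the dipole potential. The radial derivative is one-sided. -/
def obliqueDeriv (v : EuclideanSpace ℝ (Fin 3) → ℝ) (θ φ : ℝ) : ℝ :=
  -2 * sin θ * radialDeriv v θ φ + cos θ * thetaDeriv v θ φ

variable {v₁ v₂ w : EuclideanSpace ℝ (Fin 3) → ℝ}

theorem obliqueDeriv_sub (hv₁ : DifferentiableOn ℝ v₁ closedExt)
    (hv₂ : DifferentiableOn ℝ v₂ closedExt) (θ φ : ℝ) :
    obliqueDeriv (v₁ - v₂) θ φ = obliqueDeriv v₁ θ φ - obliqueDeriv v₂ θ φ := by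
  have hr : radialDeriv (v₁ - v₂) θ φ = radialDeriv v₁ θ φ - radialDeriv v₂ θ φ :=
    ((hasDerivWithinAt_radialDeriv hv₁ θ φ).sub
      (hasDerivWithinAt_radialDeriv hv₂ θ φ)).derivWithin (uniqueDiffOn_Ici 1 1 self_mem_Ici)
  have hθ : thetaDeriv (v₁ - v₂) θ φ = thetaDeriv v₁ θ φ - thetaDeriv v₂ θ φ :=
    ((hasDerivAt_thetaDeriv hv₁ θ φ).sub (hasDerivAt_thetaDeriv hv₂ θ φ)).deriv
  simp only [obliqueDeriv, hr, hθ]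
  ring

theorem nonpos_on_sphere_of_sin_mul_obliqueDeriv_nonpos (hw : ContDiffOn ℝ 2 w extDomain)
    (hwd : DifferentiableOn ℝ w closedExt) (hlap : ∀ x ∈ extDomain, 0 ≤ Δ w x)
    (hob : ∀ θ ∈ Icc (-(π / 2)) (π / 2), ∀ φ, sin θ * obliqueDeriv w θ φ ≤ 0)
    (hinf : ∀ ε > 0, ∀ᶠ x in cobounded _, w x < ε) (hequator : ∀ φ, w (sphCoord 0 φ) ≤ 0)
    {x : EuclideanSpace ℝ (Fin 3)} (hx : ‖x‖ = 1) : w x ≤ 0 := by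
  have hsphere : sphere 0 1 ⊆ closedExt := fun y hy => (mem_sphere_zero_iff_norm.1 hy).ge
  obtain ⟨y, hy, hymax⟩ := (isCompact_sphere 0 1).exists_isMaxOn
    ⟨x, mem_sphere_zero_iff_norm.2 hx⟩ (hwd.continuousOn.mono hsphere)
  have hmax (z) (hz : ‖z‖ = 1) : w z ≤ w y := hymax (mem_sphere_zero_iff_norm.2 hz)
  refine (hmax x hx).trans ?_
  by_contra! hpos
  obtain ⟨θ, hθ, φ, rfl⟩ := exists_sphCoord_eq (mem_sphere_zero_iff_norm.1 hy)
  have hθderiv : thetaDeriv w θ φ = 0 :=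
    IsLocalMax.deriv_eq_zero (Eventually.of_forall fun t => hmax _ (norm_sphCoord t φ))
  have hrderiv : radialDeriv w θ φ < 0 :=
    radial_deriv_neg_of_laplacian_nonneg (by simp) hw hwd.continuousOn hlap hinf
      (norm_sphCoord θ φ) hpos hmax (hasDerivWithinAt_radialDeriv hwd θ φ)
  have hsin : sin θ ≠ 0 := by
    intro h
    have hθ0 : θ = 0 := (sin_eq_zero_iff_of_lt_of_lt (by linarith [hθ.1, pi_pos])
      (by linarith [hθ.2, pi_pos])).1 h
    exact hpos.not_ge (hθ0 ▸ hequator φ)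
  have hneg : sin θ ^ 2 * radialDeriv w θ φ < 0 :=
    mul_neg_of_pos_of_neg (by positivity) hrderiv
  have := hob θ hθ φ
  rw [obliqueDeriv, hθderiv] at this
  linarith

theorem nonpos_of_sin_mul_obliqueDeriv_nonpos (hw : ContDiffOn ℝ 2 w extDomain)
    (hwd : DifferentiableOn ℝ w closedExt) (hlap : ∀ x ∈ extDomain, 0 ≤ Δ w x)
    (hob : ∀ θ ∈ Icc (-(π / 2)) (π / 2), ∀ φ, sin θ * obliqueDeriv w θ φ ≤ 0)
    (hinf : ∀ ε > 0, ∀ᶠ x in cobounded _, w x < ε) (hequator : ∀ φ, w (sphCoord 0 φ) ≤ 0)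
    {x : EuclideanSpace ℝ (Fin 3)} (hx : x ∈ closedExt) : w x ≤ 0 := by
  have hcl : closure extDomain = closedExt := closure_setOf_lt_norm one_ne_zero
  have h0 : (0 : EuclideanSpace ℝ (Fin 3)) ∉ closure extDomain := by simp [hcl, closedExt]
  refine nonpos_of_laplacian_nonneg (by simp) (isOpen_setOf_lt_norm 1) h0 hw
    (hcl ▸ hwd.continuousOn) hlap ?_ (fun ε hε => (hinf ε hε).filter_mono inf_le_left) (hcl ▸ hx)
  intro y hy
  rw [frontier_setOf_lt_norm one_ne_zero, mem_sphere_zero_iff_norm] at hy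
  exact nonpos_on_sphere_of_sin_mul_obliqueDeriv_nonpos hw hwd hlap hob hinf hequator hy

-- The factor `sin θ` accounts for `∇d` pointing into `Ω` on one hemisphere and out of it on the
-- other.
theorem oblique_problem_comparison (hv₁ : ContDiffOn ℝ 2 v₁ extDomain)
    (hv₂ : ContDiffOn ℝ 2 v₂ extDomain) (hd₁ : DifferentiableOn ℝ v₁ closedExt)
    (hd₂ : DifferentiableOn ℝ v₂ closedExt) (hlap : ∀ x ∈ extDomain, lap v₂ x ≤ lap v₁ x)
    (hob : ∀ θ ∈ Icc (-(π / 2)) (π / 2), ∀ φ,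
      sin θ * obliqueDeriv v₁ θ φ ≤ sin θ * obliqueDeriv v₂ θ φ)
    (hinf : ∀ ε > 0, ∀ᶠ x in cobounded _, v₁ x < v₂ x + ε)
    (hequator : ∀ φ, v₁ (sphCoord 0 φ) ≤ v₂ (sphCoord 0 φ)) {x : EuclideanSpace ℝ (Fin 3)}
    (hx : x ∈ closedExt) : v₁ x ≤ v₂ x := by
  refine sub_nonpos.1 (nonpos_of_sin_mul_obliqueDeriv_nonpos (w := v₁ - v₂) (hv₁.sub hv₂)
    (hd₁.sub hd₂) (fun y hy => ?_) (fun θ hθ φ => ?_) (fun ε hε => ?_)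
    (fun φ => sub_nonpos.2 (hequator φ)) hx)
  · have hnhds : extDomain ∈ 𝓝 y := (isOpen_setOf_lt_norm 1).mem_nhds hy
    have hc₁ := hv₁.contDiffAt hnhds
    have hc₂ := hv₂.contDiffAt hnhds
    have hsub : ContDiffAt ℝ 2 (v₁ - v₂) y := hc₁.sub hc₂
    rw [← lap_eq_laplacian hsub, lap_sub hc₁ hc₂]
    exact sub_nonneg.2 (hlap y hy)
  · rw [obliqueDeriv_sub hd₁ hd₂, mul_sub]
    exact sub_nonpos.2 (hob θ hθ φ)
  · exact (hinf ε hε).mono fun y hy => sub_lt_iff_lt_add'.2 hy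

theorem oblique_problem_uniqueness_general (hv₁ : ContDiffOn ℝ 2 v₁ extDomain)
    (hv₂ : ContDiffOn ℝ 2 v₂ extDomain) (hd₁ : DifferentiableOn ℝ v₁ closedExt)
    (hd₂ : DifferentiableOn ℝ v₂ closedExt) (hlap : EqOn (lap v₁) (lap v₂) extDomain)
    (hob : ∀ θ ∈ Icc (-(π / 2)) (π / 2), ∀ φ, obliqueDeriv v₁ θ φ = obliqueDeriv v₂ θ φ)
    (hinf : Tendsto (v₁ - v₂) (cobounded _) (𝓝 0))
    (hequator : ∀ φ, v₁ (sphCoord 0 φ) = v₂ (sphCoord 0 φ)) : EqOn v₁ v₂ closedExt := by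
  intro x hx
  refine le_antisymm
    (oblique_problem_comparison hv₁ hv₂ hd₁ hd₂ (fun y hy => (hlap hy).ge)
      (fun θ hθ φ => by rw [hob θ hθ φ]) (fun ε hε => ?_) (fun φ => (hequator φ).le) hx)
    (oblique_problem_comparison hv₂ hv₁ hd₂ hd₁ (fun y hy => (hlap hy).le)
      (fun θ hθ φ => by rw [hob θ hθ φ]) (fun ε hε => ?_) (fun φ => (hequator φ).ge) hx)
  · filter_upwards [hinf.eventually_lt_const hε] with y hy using sub_lt_iff_lt_add'.1 hy
  · filter_upwards [hinf.eventually_const_lt (neg_lt_zero.2 hε)] with y hy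
    linarith [show -ε < v₁ y - v₂ y from hy]

end ObliqueProblem

/-- Lemma 3.5: uniqueness for the linearized oblique derivative
problem. Two classical solutions of `Δv = 0` in `Ω`, `∇d⋅∇v = f/2` on `𝕊`,
`v → 0` at infinity, `v = h` on the equator, coincide on `cl Ω`. -/
theorem oblique_problem_uniqueness
    (v₁ v₂ : EuclideanSpace ℝ (Fin 3) → ℝ) (f : ℝ → ℝ → ℝ) (h : ℝ → ℝ)
    (h₁ : SolvesObliqueR v₁ f h) (h₂ : SolvesObliqueR v₂ f h) :
    Set.EqOn v₁ v₂ closedExt := by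
  obtain ⟨hC₁, hD₁, hlap₁, hob₁, hinf₁, heq₁⟩ := h₁
  obtain ⟨hC₂, hD₂, hlap₂, hob₂, hinf₂, heq₂⟩ := h₂
  have hinf : Filter.Tendsto (v₁ - v₂) (cobounded _) (𝓝 0) := by
    rw [← sub_zero (0 : ℝ)]
    exact hinf₁.sub hinf₂
  exact oblique_problem_uniqueness_general hC₁ hC₂ (hD₁.differentiableOn one_ne_zero)
    (hD₂.differentiableOn one_ne_zero) (fun x hx => (hlap₁ x hx).trans (hlap₂ x hx).symm)
    (fun θ hθ φ => (hob₁ θ hθ φ).trans (hob₂ θ hθ φ).symm) hinf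
    (fun φ => (heq₁ φ).trans (heq₂ φ).symm)

end
end

section
/- There are positive constants c and C such that for all natural numbers n: c (n+1)^{1/4} ≤ n!!/√(n!) ≤ C (n+1)^{1/4} and c √(n+1) ≤ (n+1)!!/n!! ≤ C √(n+1). -/
noncomputable section

open MeasureTheory Real Filter

/-!
Everything rests on the integer inequality `(n + 1)‼ ^ 2 ≤ 2 * (n + 1) * n‼ ^ 2`, which passes from
`n` to `n + 2` because `(n + 1) * (n + 3) ≤ (n + 2) ^ 2`. Applied to `n + 1` it also bounds
`(n + 1)‼ / n‼` from below, since `(n + 2)‼ = (n + 2) * n‼`. Finally `(n + 1) * n ! = (n + 1)‼ * n‼`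
eliminates `(n + 1)‼`, which turns the two bounds into bounds on `n‼ ^ 4 / n ! ^ 2`.
-/

section DoubleFactorial

open scoped Nat

theorem sq_doubleFactorial_succ_le : ∀ n : ℕ, (n + 1)‼ ^ 2 ≤ 2 * (n + 1) * n‼ ^ 2
  | 0 => by simp
  | 1 => by simp
  | n + 2 => by
    have weight_le : (n + 3) * (n + 1) ≤ (n + 2) ^ 2 := by nlinarith
    calc (n + 3)‼ ^ 2 = (n + 3) ^ 2 * (n + 1)‼ ^ 2 := by
          rw [Nat.doubleFactorial_add_two (n + 1), mul_pow]
      _ ≤ (n + 3) ^ 2 * (2 * (n + 1) * n‼ ^ 2) := by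
          gcongr
          exact sq_doubleFactorial_succ_le n
      _ = 2 * (n + 3) * ((n + 3) * (n + 1)) * n‼ ^ 2 := by ring
      _ ≤ 2 * (n + 3) * (n + 2) ^ 2 * n‼ ^ 2 := by gcongr
      _ = 2 * (n + 3) * (n + 2)‼ ^ 2 := by
          rw [Nat.doubleFactorial_add_two n, mul_pow, mul_assoc]

theorem add_two_mul_sq_doubleFactorial_le (n : ℕ) : (n + 2) * n‼ ^ 2 ≤ 2 * (n + 1)‼ ^ 2 := by
  refine Nat.le_of_mul_le_mul_left (c := n + 2) ?_ (by positivity)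
  calc (n + 2) * ((n + 2) * n‼ ^ 2) = (n + 2)‼ ^ 2 := by
        rw [Nat.doubleFactorial_add_two]
        ring
    _ ≤ 2 * (n + 2) * (n + 1)‼ ^ 2 := sq_doubleFactorial_succ_le (n + 1)
    _ = (n + 2) * (2 * (n + 1)‼ ^ 2) := by ring

theorem succ_mul_factorial_eq_mul_doubleFactorial (n : ℕ) : (n + 1) * n ! = (n + 1)‼ * n‼ := by
  rw [← Nat.factorial_succ, Nat.factorial_eq_mul_doubleFactorial]

theorem succ_mul_sq_factorial_le (n : ℕ) : (n + 1) * n ! ^ 2 ≤ 2 * n‼ ^ 4 := by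
  refine Nat.le_of_mul_le_mul_left (c := n + 1) ?_ (by positivity)
  calc (n + 1) * ((n + 1) * n ! ^ 2) = ((n + 1) * n !) ^ 2 := by ring
    _ = (n + 1)‼ ^ 2 * n‼ ^ 2 := by
        rw [succ_mul_factorial_eq_mul_doubleFactorial, mul_pow]
    _ ≤ 2 * (n + 1) * n‼ ^ 2 * n‼ ^ 2 := by
        gcongr
        exact sq_doubleFactorial_succ_le n
    _ = (n + 1) * (2 * n‼ ^ 4) := by ring

theorem doubleFactorial_pow_four_le (n : ℕ) : n‼ ^ 4 ≤ 2 * (n + 1) * n ! ^ 2 := by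
  refine Nat.le_of_mul_le_mul_left (c := n + 1) ?_ (by positivity)
  calc (n + 1) * n‼ ^ 4 ≤ (n + 2) * n‼ ^ 4 := by gcongr; simp
    _ = (n + 2) * n‼ ^ 2 * n‼ ^ 2 := by ring
    _ ≤ 2 * (n + 1)‼ ^ 2 * n‼ ^ 2 :=
        Nat.mul_le_mul_right _ (add_two_mul_sq_doubleFactorial_le n)
    _ = 2 * ((n + 1) * n !) ^ 2 := by
        rw [succ_mul_factorial_eq_mul_doubleFactorial]
        ring
    _ = (n + 1) * (2 * (n + 1) * n ! ^ 2) := by ring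

theorem doubleFactorial_succ_div_le_sqrt (n : ℕ) :
    ((n + 1)‼ : ℝ) / n‼ ≤ √(2 * (n + 1)) := by
  apply Real.le_sqrt_of_sq_le
  rw [div_pow, div_le_iff₀ (by positivity)]
  exact_mod_cast sq_doubleFactorial_succ_le n

theorem sqrt_le_doubleFactorial_succ_div (n : ℕ) :
    √((n + 2) / 2) ≤ ((n + 1)‼ : ℝ) / n‼ := by
  apply Real.sqrt_le_iff.mpr ⟨by positivity, ?_⟩
  rw [div_pow, div_le_div_iff₀ (by positivity) (by positivity), mul_comm (_ ^ 2)]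
  exact_mod_cast add_two_mul_sq_doubleFactorial_le n

theorem div_sqrt_pow_four {x : ℝ} (hx : 0 ≤ x) (y : ℝ) : (y / √x) ^ 4 = y ^ 4 / x ^ 2 := by
  rw [div_pow, show 4 = 2 * 2 from rfl, pow_mul √x, Real.sq_sqrt hx]

theorem doubleFactorial_div_sqrt_factorial_le_rpow (n : ℕ) :
    (n‼ : ℝ) / √(n !) ≤ (2 * (n + 1)) ^ (1 / 4 : ℝ) := by
  rw [one_div, Real.le_rpow_inv_iff_of_pos (by positivity) (by positivity) (by norm_num),
    Real.rpow_ofNat, div_sqrt_pow_four (Nat.cast_nonneg _), div_le_iff₀ (by positivity)]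
  exact_mod_cast doubleFactorial_pow_four_le n

theorem rpow_le_doubleFactorial_div_sqrt_factorial (n : ℕ) :
    ((n + 1) / 2) ^ (1 / 4 : ℝ) ≤ (n‼ : ℝ) / √(n !) := by
  rw [one_div, Real.rpow_inv_le_iff_of_pos (by positivity) (by positivity) (by norm_num),
    Real.rpow_ofNat, div_sqrt_pow_four (Nat.cast_nonneg _),
    div_le_div_iff₀ (by positivity) (by positivity), mul_comm (_ ^ 4)]
  exact_mod_cast succ_mul_sq_factorial_le n

end DoubleFactorial

/-- Lemma A.1: double factorial asymptotics.
There are `c, C > 0` such that for all `n`: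
`c (n+1)^{1/4} ≤ n‼/√(n!) ≤ C (n+1)^{1/4}` and
`c √(n+1) ≤ (n+1)‼/n‼ ≤ C √(n+1)`. -/
theorem double_factorial_bounds :
    ∃ c > 0, ∃ C > 0, ∀ n : ℕ,
      (c * ((n : ℝ) + 1) ^ ((1 : ℝ) / 4) ≤
          (Nat.doubleFactorial n : ℝ) / Real.sqrt (Nat.factorial n) ∧
        (Nat.doubleFactorial n : ℝ) / Real.sqrt (Nat.factorial n) ≤
          C * ((n : ℝ) + 1) ^ ((1 : ℝ) / 4)) ∧
      (c * Real.sqrt ((n : ℝ) + 1) ≤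
          (Nat.doubleFactorial (n + 1) : ℝ) / (Nat.doubleFactorial n : ℝ) ∧
        (Nat.doubleFactorial (n + 1) : ℝ) / (Nat.doubleFactorial n : ℝ) ≤
          C * Real.sqrt ((n : ℝ) + 1)) := by
  refine ⟨1 / 2, by norm_num, 2, by norm_num, fun n => ⟨⟨?_, ?_⟩, ?_, ?_⟩⟩
  · calc (1 / 2 : ℝ) * ((n : ℝ) + 1) ^ (1 / 4 : ℝ)
        ≤ (1 / 2) ^ (1 / 4 : ℝ) * ((n : ℝ) + 1) ^ (1 / 4 : ℝ) := by
          gcongr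
          exact Real.self_le_rpow_of_le_one (by norm_num) (by norm_num) (by norm_num)
      _ = (((n : ℝ) + 1) / 2) ^ (1 / 4 : ℝ) := by
          rw [← Real.mul_rpow (by norm_num) (by positivity), one_div_mul_eq_div]
      _ ≤ _ := rpow_le_doubleFactorial_div_sqrt_factorial n
  · calc _ ≤ (2 * ((n : ℝ) + 1)) ^ (1 / 4 : ℝ) := doubleFactorial_div_sqrt_factorial_le_rpow n
      _ = 2 ^ (1 / 4 : ℝ) * ((n : ℝ) + 1) ^ (1 / 4 : ℝ) :=
          Real.mul_rpow (by norm_num) (by positivity)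
      _ ≤ _ := by
          gcongr
          exact Real.rpow_le_self_of_one_le (by norm_num) (by norm_num)
  · calc 1 / 2 * √((n : ℝ) + 1) = √((n + 1) / 2 ^ 2) := by
          rw [Real.sqrt_div' _ (by norm_num), Real.sqrt_sq zero_le_two, one_div_mul_eq_div]
      _ ≤ √((n + 2) / 2) := by gcongr <;> norm_num
      _ ≤ _ := sqrt_le_doubleFactorial_succ_div n
  · calc _ ≤ √(2 * ((n : ℝ) + 1)) := doubleFactorial_succ_div_le_sqrt n
      _ ≤ √(2 ^ 2 * (n + 1)) := by gcongr; norm_num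
      _ = _ := by rw [Real.sqrt_mul (by norm_num), Real.sqrt_sq zero_le_two]

end
end
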